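/- For all integers 1 ≤ i ≤ j ≤ n+2 and 1 ≤ i′ ≤ j′ ≤ n+2, the k-dimension of Hom_{rep Q}(M(i,j), M(i′,j′)) equals the k-dimension of Hom_{rep Q̄}(M̄(i,j), M̄(i′,j′)). -/

import Mathlib

open scoped Classical

noncomputable section

namespace CambrianA

/-! ### Combinatorics of a type `A_{n+2}` quiver.

Vertices are `1, …, n+2`.  For `1 ≤ i ≤ n+1`, `ε i = true` means that the arrow between
`i` and `i+1` is oriented `i → i+1` (`i` is *upper-barred*), and `ε i = false` means it is
oriented `(i+1) → i` (`i` is *lower-barred*). -/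

/-- `MaxIncr n ε i j` : the path `i → i+1 → ⋯ → j` is a maximal increasing path of `Q`. -/
def MaxIncr (n : ℕ) (ε : ℕ → Bool) (i j : ℕ) : Prop :=
  1 ≤ i ∧ i ≤ j ∧ j ≤ n + 2 ∧ (∀ ℓ, i ≤ ℓ → ℓ < j → ε ℓ = true) ∧
    (i = 1 ∨ ε (i - 1) = false) ∧ (j = n + 2 ∨ ε j = false)

/-- `MaxDecr n ε i j` : the path `i → i-1 → ⋯ → j` is a maximal decreasing path of `Q`. -/
def MaxDecr (n : ℕ) (ε : ℕ → Bool) (i j : ℕ) : Prop :=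
  1 ≤ j ∧ j ≤ i ∧ i ≤ n + 2 ∧ (∀ ℓ, j ≤ ℓ → ℓ < i → ε ℓ = false) ∧
    (i = n + 2 ∨ ε i = true) ∧ (j = 1 ∨ ε (j - 1) = true)

/-- Vertices of the polygon lying on the lower boundary: `0`, `n+2` and lower-barred ones. -/
def LowerVertex (n : ℕ) (ε : ℕ → Bool) (x : ℕ) : Prop :=
  x = 0 ∨ x = n + 2 ∨ (1 ≤ x ∧ x ≤ n + 1 ∧ ε x = false)

/-- Vertices of the polygon lying on the upper boundary: `0`, `n+2` and upper-barred ones. -/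
def UpperVertex (n : ℕ) (ε : ℕ → Bool) (x : ℕ) : Prop :=
  x = 0 ∨ x = n + 2 ∨ (1 ≤ x ∧ x ≤ n + 1 ∧ ε x = true)

/-- `(a,b)` is a lower boundary edge: `a < b` are consecutive lower vertices. -/
def LowerEdge (n : ℕ) (ε : ℕ → Bool) (a b : ℕ) : Prop :=
  LowerVertex n ε a ∧ LowerVertex n ε b ∧ a < b ∧
    ∀ c, LowerVertex n ε c → ¬(a < c ∧ c < b)

/-- `(a,b)` is an upper boundary edge: `a < b` are consecutive upper vertices. -/
def UpperEdge (n : ℕ) (ε : ℕ → Bool) (a b : ℕ) : Prop :=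
  UpperVertex n ε a ∧ UpperVertex n ε b ∧ a < b ∧
    ∀ c, UpperVertex n ε c → ¬(a < c ∧ c < b)

def BoundaryEdge (n : ℕ) (ε : ℕ → Bool) (a b : ℕ) : Prop :=
  LowerEdge n ε a b ∨ UpperEdge n ε a b

/-- `IsHook n ε a lo hi` : the hook of the arrow of `Q` between `a` and `a+1` is the
maximal path supported on the interval `[lo, hi]`.
If `ε a = true` (arrow `a → a+1`, source `a`), the hook is the maximal decreasing path
starting at `a`; if `ε a = false` (arrow `a+1 → a`, source `a+1`), the hook is the
maximal increasing path starting at `a+1`. -/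
def IsHook (n : ℕ) (ε : ℕ → Bool) (a lo hi : ℕ) : Prop :=
  if ε a = true then
    hi = a ∧ 1 ≤ lo ∧ lo ≤ a ∧ (∀ ℓ, lo ≤ ℓ → ℓ < a → ε ℓ = false) ∧
      (lo = 1 ∨ ε (lo - 1) = true)
  else
    lo = a + 1 ∧ a + 1 ≤ hi ∧ hi ≤ n + 2 ∧ (∀ ℓ, a + 1 ≤ ℓ → ℓ < hi → ε ℓ = true) ∧
      (hi = n + 2 ∨ ε hi = false)

/-- `IsCohook n ε a lo hi` : the cohook of the arrow of `Q` between `a` and `a+1` is the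
maximal path supported on the interval `[lo, hi]`, ending at the target of the arrow. -/
def IsCohook (n : ℕ) (ε : ℕ → Bool) (a lo hi : ℕ) : Prop :=
  if ε a = true then
    lo = a + 1 ∧ a + 1 ≤ hi ∧ hi ≤ n + 2 ∧ (∀ ℓ, a + 1 ≤ ℓ → ℓ < hi → ε ℓ = false) ∧
      (hi = n + 2 ∨ ε hi = true)
  else
    hi = a ∧ 1 ≤ lo ∧ lo ≤ a ∧ (∀ ℓ, lo ≤ ℓ → ℓ < a → ε ℓ = true) ∧
      (lo = 1 ∨ ε (lo - 1) = false)

/-- Counterclockwise neighbor `R⁻¹(ℓ)` of the vertex `ℓ` of the polygon `P(Q)`, for the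
cyclic order `0`, lower-barred vertices increasing, `n+2`, upper-barred vertices
decreasing. -/
def Rinv (n : ℕ) (ε : ℕ → Bool) (ℓ : ℕ) : ℕ :=
  if ℓ = n + 2 then sSup ({0} ∪ {x | 1 ≤ x ∧ x ≤ n + 1 ∧ ε x = true})
  else if 1 ≤ ℓ ∧ ℓ ≤ n + 1 ∧ ε ℓ = true then
    sSup ({0} ∪ {x | 1 ≤ x ∧ x < ℓ ∧ ε x = true})
  else
    sInf ({n + 2} ∪ {x | ℓ < x ∧ x ≤ n + 1 ∧ ε x = false})

/-- `γ(i′,j′)` is a pivot of `γ(i,j)`. -/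
def IsPivot (n : ℕ) (ε : ℕ → Bool) (i j i' j' : ℕ) : Prop :=
  (i' = Rinv n ε i ∧ j' = j ∧ Rinv n ε i < j) ∨
    (i' = i ∧ j' = Rinv n ε j ∧ i < Rinv n ε j)

/-! ### Geometry of the polygon `P(Q)`.

The plane is identified with `ℂ`; `p x` is the vertex of the polygon labeled `x`,
for `0 ≤ x ≤ n+2`. -/

/-- The hypotheses on the points `p 0, …, p (n+2)` realizing the polygon `P(Q)`:
strictly increasing `x`-coordinates; `p 0` and `p (n+2)` on a common horizontal line `L`;
upper-barred vertices above `L`, lower-barred vertices below `L`; convex position. -/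
def PolyPts (n : ℕ) (ε : ℕ → Bool) (p : ℕ → ℂ) : Prop :=
  (∀ a b, a < b → b ≤ n + 2 → (p a).re < (p b).re) ∧
    (p (n + 2)).im = (p 0).im ∧
    (∀ i, 1 ≤ i → i ≤ n + 1 →
      (ε i = true → (p 0).im < (p i).im) ∧ (ε i = false → (p i).im < (p 0).im)) ∧
    ∀ i, i ≤ n + 2 → p i ∉ convexHull ℝ (p '' {j | j ≤ n + 2 ∧ j ≠ i})

/-- The line segment `γ(e.1, e.2)` of the polygon. -/
def Seg (p : ℕ → ℂ) (e : ℕ × ℕ) : Set ℂ := segment ℝ (p e.1) (p e.2)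

/-- Two segments cross when they intersect in a point that is not a common endpoint. -/
def Cross (p : ℕ → ℂ) (e f : ℕ × ℕ) : Prop :=
  ∃ z, z ∈ Seg p e ∧ z ∈ Seg p f ∧
    ¬((z = p e.1 ∨ z = p e.2) ∧ (z = p f.1 ∨ z = p f.2))

/-- Slope of the segment `γ(e.1, e.2)`. -/
def slope (p : ℕ → ℂ) (e : ℕ × ℕ) : ℝ :=
  ((p e.2).im - (p e.1).im) / ((p e.2).re - (p e.1).re)

def ValidPair (n : ℕ) (e : ℕ × ℕ) : Prop := e.1 < e.2 ∧ e.2 ≤ n + 2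

/-- A triangulation of `P(Q)`: a maximal collection of pairwise noncrossing segments. -/
def IsTriangulation (n : ℕ) (p : ℕ → ℂ) (T : Finset (ℕ × ℕ)) : Prop :=
  (∀ e ∈ T, ValidPair n e) ∧ (∀ e ∈ T, ∀ f ∈ T, e ≠ f → ¬Cross p e f) ∧
    ∀ e, ValidPair n e → e ∉ T → ∃ f ∈ T, Cross p e f

/-- Cross product of two planar vectors; positive iff `(u, v)` is counterclockwise. -/
def cross2 (u v : ℂ) : ℝ := u.re * v.im - u.im * v.re

/-- Arrows of the adjacency quiver `Q(T)` of a triangulation `T`: `e → f` whenever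
`e` and `f` are sides of a common triangle of `T` and `f` follows `e` going
counterclockwise around that triangle. -/
def TriArrow (p : ℕ → ℂ) (T : Finset (ℕ × ℕ)) (e f : ℕ × ℕ) : Prop :=
  ∃ a b c : ℕ, a < b ∧ b < c ∧ (a, b) ∈ T ∧ (b, c) ∈ T ∧ (a, c) ∈ T ∧
    ((0 < cross2 (p b - p a) (p c - p a) ∧
        ((e = (a, b) ∧ f = (b, c)) ∨ (e = (b, c) ∧ f = (a, c)) ∨
          (e = (a, c) ∧ f = (a, b)))) ∨
      (cross2 (p b - p a) (p c - p a) < 0 ∧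
        ((e = (a, c) ∧ f = (b, c)) ∨ (e = (b, c) ∧ f = (a, b)) ∨
          (e = (a, b) ∧ f = (a, c)))))

/-! ### Representations of `Q` -/

/-- A finite dimensional representation of the quiver `Q` of type `A_{n+2}` over `k`.
The vector spaces are indexed by `ℕ`, and are required to vanish outside the set
`{1, …, n+2}` of vertices of `Q`.  For each `i`, `fwd i : V i → V (i+1)` is the structure
map of the arrow `i → i+1` (it is required to vanish when the arrow is oriented in the
other direction, i.e. `ε i = false`) and `bwd i : V (i+1) → V i` is the structure map of
the arrow `i+1 → i` (required to vanish when `ε i = true`). -/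
structure ARep (k : Type) [Field k] (n : ℕ) (ε : ℕ → Bool) where
  V : ℕ → Type
  [acg : ∀ x, AddCommGroup (V x)]
  [mod : ∀ x, Module k (V x)]
  [fdim : ∀ x, FiniteDimensional k (V x)]
  triv : ∀ x, x = 0 ∨ n + 2 < x → ∀ v : V x, v = 0
  fwd : ∀ i, V i →ₗ[k] V (i + 1)
  bwd : ∀ i, V (i + 1) →ₗ[k] V i
  fwd_zero : ∀ i, ε i = false → fwd i = 0
  bwd_zero : ∀ i, ε i = true → bwd i = 0

attribute [instance] ARep.acg ARep.mod ARep.fdim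

variable {k : Type} [Field k] {n : ℕ} {ε : ℕ → Bool}

/-- Morphisms of representations. -/
@[ext]
structure ARep.Hom (M N : ARep k n ε) where
  app : ∀ x, M.V x →ₗ[k] N.V x
  comm_fwd : ∀ i (v : M.V i), app (i + 1) (M.fwd i v) = N.fwd i (app i v)
  comm_bwd : ∀ i (v : M.V (i + 1)), app i (M.bwd i v) = N.bwd i (app (i + 1) v)

/-- The identity morphism. -/
def ARep.Hom.id (M : ARep k n ε) : M.Hom M :=
  ⟨fun _ => LinearMap.id, fun _ _ => rfl, fun _ _ => rfl⟩

/-- Composition of morphisms. -/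
def ARep.Hom.comp {M N P : ARep k n ε} (g : N.Hom P) (f : M.Hom N) : M.Hom P where
  app x := (g.app x).comp (f.app x)
  comm_fwd i v := by simp only [LinearMap.comp_apply, f.comm_fwd, g.comm_fwd]
  comm_bwd i v := by simp only [LinearMap.comp_apply, f.comm_bwd, g.comm_bwd]

/-- Sum of two morphisms. -/
def ARep.Hom.add {M N : ARep k n ε} (f g : M.Hom N) : M.Hom N where
  app x := f.app x + g.app x
  comm_fwd i v := by
    simp only [LinearMap.add_apply, f.comm_fwd, g.comm_fwd, map_add]
  comm_bwd i v := by
    simp only [LinearMap.add_apply, f.comm_bwd, g.comm_bwd, map_add]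

/-- Scalar multiple of a morphism. -/
def ARep.Hom.smul {M N : ARep k n ε} (c : k) (f : M.Hom N) : M.Hom N where
  app x := c • f.app x
  comm_fwd i v := by simp only [LinearMap.smul_apply, f.comm_fwd, map_smul]
  comm_bwd i v := by simp only [LinearMap.smul_apply, f.comm_bwd, map_smul]

/-- Isomorphism of representations. -/
def ARep.Iso (M N : ARep k n ε) : Prop :=
  ∃ f : M.Hom N, ∀ x, Function.Bijective (f.app x)

/-- The zero representation(s). -/
def ARep.IsZero (M : ARep k n ε) : Prop := ∀ x, ∀ v : M.V x, v = 0

/-- The support of a representation. -/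
def ARep.supp (M : ARep k n ε) : Set ℕ := {x | ∃ v : M.V x, v ≠ 0}

/-- Direct sum of two representations. -/
def ARep.dsum (M N : ARep k n ε) : ARep k n ε where
  V x := M.V x × N.V x
  acg _ := by infer_instance
  mod _ := by infer_instance
  fdim _ := by infer_instance
  triv x hx v := by
    have h1 := M.triv x hx v.1
    have h2 := N.triv x hx v.2
    exact Prod.ext h1 h2
  fwd i := (M.fwd i).prodMap (N.fwd i)
  bwd i := (M.bwd i).prodMap (N.bwd i)
  fwd_zero i h := by
    show (M.fwd i).prodMap (N.fwd i) = 0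
    rw [M.fwd_zero i h, N.fwd_zero i h]
    apply LinearMap.ext; rintro ⟨a, b⟩; simp
  bwd_zero i h := by
    show (M.bwd i).prodMap (N.bwd i) = 0
    rw [M.bwd_zero i h, N.bwd_zero i h]
    apply LinearMap.ext; rintro ⟨a, b⟩; simp

/-- One dimensional space `k` if `P` holds, `0` otherwise (as a submodule of `k`). -/
def fiber (k : Type) [Field k] (P : Prop) : Submodule k k := if P then ⊤ else ⊥

/-- The canonical map `fiber k P → fiber k Q` : "identity" if `P ∧ Q`, zero otherwise. -/
def fiberMap (k : Type) [Field k] (P Q : Prop) : fiber k P →ₗ[k] fiber k Q :=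
  if h : P ∧ Q then
    { toFun := fun v => ⟨(v : k), by
        have hfib : fiber k Q = ⊤ := if_pos h.2
        rw [hfib]; exact Submodule.mem_top⟩
      map_add' := fun _ _ => rfl
      map_smul' := fun _ _ => rfl }
  else 0

/-- The zero representation. -/
def zeroRep (k : Type) [Field k] (n : ℕ) (ε : ℕ → Bool) : ARep k n ε where
  V _ := ↥(fiber k False)
  acg _ := by infer_instance
  mod _ := by infer_instance
  fdim _ := by infer_instance
  triv x _ v := by
    have hfib : fiber k False = ⊥ := if_neg (fun h : False => h.elim)
    obtain ⟨w, hw⟩ := v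
    apply Subtype.ext
    have hb : w ∈ (⊥ : Submodule k k) := hfib ▸ hw
    exact (Submodule.mem_bot k).1 hb
  fwd _ := 0
  bwd _ := 0
  fwd_zero _ _ := rfl
  bwd_zero _ _ := rfl

/-- The condition for a vertex `x` to be in the support of the interval representation
`M(i,j)`. -/
def SuppCond (n i j x : ℕ) : Prop := i ≤ x ∧ x ≤ j ∧ 1 ≤ x ∧ x ≤ n + 2

/-- The interval (string) representation `M(i,j)` of `Q`: one dimensional at each vertex
`x` with `i ≤ x ≤ j`, zero elsewhere, with identity maps on all arrows whose endpoints
both lie in `[i,j]`. -/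
def intervalRep (k : Type) [Field k] (n : ℕ) (ε : ℕ → Bool) (i j : ℕ) : ARep k n ε where
  V x := ↥(fiber k (SuppCond n i j x))
  acg _ := by infer_instance
  mod _ := by infer_instance
  fdim _ := by infer_instance
  triv x hx v := by
    have hP : ¬SuppCond n i j x := by simp only [SuppCond]; omega
    have hfib : fiber k (SuppCond n i j x) = ⊥ := if_neg hP
    obtain ⟨w, hw⟩ := v
    apply Subtype.ext
    have hb : w ∈ (⊥ : Submodule k k) := hfib ▸ hw
    exact (Submodule.mem_bot k).1 hb
  fwd ℓ :=
    if ε ℓ = true then fiberMap k (SuppCond n i j ℓ) (SuppCond n i j (ℓ + 1)) else 0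
  bwd ℓ :=
    if ε ℓ = true then 0 else fiberMap k (SuppCond n i j (ℓ + 1)) (SuppCond n i j ℓ)
  fwd_zero ℓ h := by simp [h]
  bwd_zero ℓ h := by simp [h]

/-- Direct sum of a list of representations. -/
def dsumList (k : Type) [Field k] (n : ℕ) (ε : ℕ → Bool) :
    List (ARep k n ε) → ARep k n ε
  | [] => zeroRep k n ε
  | M :: L => M.dsum (dsumList k n ε L)

/-- Indecomposable representations. -/
def ARep.Indec (M : ARep k n ε) : Prop :=
  ¬M.IsZero ∧ ∀ A B : ARep k n ε, M.Iso (A.dsum B) → A.IsZero ∨ B.IsZero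

/-- `A` is a direct summand of `T`. -/
def ARep.IsSummand (A T : ARep k n ε) : Prop := ∃ B : ARep k n ε, T.Iso (A.dsum B)

/-- A representation is basic when it has no repeated indecomposable direct summand. -/
def ARep.Basic (T : ARep k n ε) : Prop :=
  ∀ A : ARep k n ε, A.Indec → ¬(A.dsum A).IsSummand T

/-- A short exact sequence `0 → B → E → A → 0`. -/
structure SES (B A : ARep k n ε) where
  E : ARep k n ε
  ι : B.Hom E
  π : E.Hom A
  inj : ∀ x, Function.Injective (ι.app x)
  surj : ∀ x, Function.Surjective (π.app x)
  exct : ∀ x (v : E.V x), π.app x v = 0 ↔ ∃ u, ι.app x u = v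

/-- A short exact sequence splits. -/
def SES.Splits {B A : ARep k n ε} (σ : SES B A) : Prop :=
  ∃ r : σ.E.Hom B, ∀ x (v : B.V x), r.app x (σ.ι.app x v) = v

/-- `Ext¹(A, B) = 0` : every short exact sequence `0 → B → E → A → 0` splits. -/
def ExtZero (A B : ARep k n ε) : Prop := ∀ σ : SES B A, σ.Splits

/-- `Ext¹(A,B) ≅ k`, generated by (the class of) a short exact sequence
`0 → B → E → A → 0` with indecomposable middle term `E`: there is a non-split such
sequence `σ` with `σ.E` indecomposable such that every non-split sequence is equivalent
to a nonzero scalar multiple of `σ`. -/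
def ExtOneDimIndecMid (A B : ARep k n ε) : Prop :=
  ∃ σ : SES B A, ¬σ.Splits ∧ σ.E.Indec ∧
    ∀ τ : SES B A, ¬τ.Splits → ∃ c : k, c ≠ 0 ∧
      ∃ φ : σ.E.Hom τ.E, (∀ x, Function.Bijective (φ.app x)) ∧
        (∀ x (v : B.V x), φ.app x (σ.ι.app x v) = τ.ι.app x v) ∧
        (∀ x (v : σ.E.V x), τ.π.app x (φ.app x v) = c • σ.π.app x v)

/-- Almost rigid representations. -/
def AlmostRigid (T : ARep k n ε) : Prop :=
  T.Basic ∧ ∀ A B : ARep k n ε, A.Indec → B.Indec → A.IsSummand T → B.IsSummand T →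
    ExtZero A B ∨ ExtOneDimIndecMid A B

/-- Maximal almost rigid representations. -/
def MaxAlmostRigid (T : ARep k n ε) : Prop :=
  AlmostRigid T ∧ ∀ M : ARep k n ε, ¬M.IsZero → ¬AlmostRigid (T.dsum M)

/-- `f` is a section. -/
def ARep.Hom.IsSection {M N : ARep k n ε} (f : M.Hom N) : Prop :=
  ∃ g : N.Hom M, ∀ x (v : M.V x), g.app x (f.app x v) = v

/-- `f` is a retraction. -/
def ARep.Hom.IsRetraction {M N : ARep k n ε} (f : M.Hom N) : Prop :=
  ∃ g : N.Hom M, ∀ x (v : N.V x), f.app x (g.app x v) = v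

/-- Irreducible morphisms: `f` is neither a section nor a retraction, and in every
factorization `f = g ∘ h` either `h` is a section or `g` is a retraction. -/
def ARep.Hom.Irred {M N : ARep k n ε} (f : M.Hom N) : Prop :=
  ¬f.IsSection ∧ ¬f.IsRetraction ∧
    ∀ (Z : ARep k n ε) (h : M.Hom Z) (g : Z.Hom N),
      (∀ x (v : M.V x), f.app x v = g.app x (h.app x v)) → h.IsSection ∨ g.IsRetraction

/-- Subrepresentations : families of subspaces closed under the structure maps. -/
structure Subrep (M : ARep k n ε) where
  U : ∀ x, Submodule k (M.V x)
  fwd_mem : ∀ i, ∀ v ∈ U i, M.fwd i v ∈ U (i + 1)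
  bwd_mem : ∀ i, ∀ v ∈ U (i + 1), M.bwd i v ∈ U i

/-- The central charge `Z(M) = Σ_{x=1}^{n+2} dim_k(M_x) · (p_x − p_{x−1})`. -/
def charge (p : ℕ → ℂ) (M : ARep k n ε) : ℂ :=
  ∑ x ∈ Finset.Icc 1 (n + 2), (Module.finrank k (M.V x) : ℂ) * (p x - p (x - 1))

/-- The central charge of a subrepresentation. -/
def subCharge (p : ℕ → ℂ) {M : ARep k n ε} (L : Subrep M) : ℂ :=
  ∑ x ∈ Finset.Icc 1 (n + 2), (Module.finrank k (L.U x) : ℂ) * (p x - p (x - 1))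

/-- The representation `F(T) = ⊕_{γ(a,b) ∈ T} M(a+1, b)` attached to a collection `T` of
segments of the polygon `P(Q)`. -/
def FRep (k : Type) [Field k] (n : ℕ) (ε : ℕ → Bool) (T : Finset (ℕ × ℕ)) : ARep k n ε :=
  dsumList k n ε (T.toList.map fun e => intervalRep k n ε (e.1 + 1) e.2)

end CambrianA

namespace CambrianA

/-- The orientation of the subdivided quiver `Q̄` of type `A_{2n+3}` : the vertex `v` of
`Q̄` (a half-integer `1, 3/2, …, n+2`) corrresponds to the index `2v−1 ∈ {1, …, 2n+3}`,
and both halves of the original arrow `i ↔ i+1` inherit its orientation. -/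
def barε (ε : ℕ → Bool) : ℕ → Bool := fun a => ε ((a + 1) / 2)

theorem fiber_mem_of {k : Type} [Field k] {P : Prop} (h : P) (x : k) : x ∈ fiber k P := by
  have hfib : fiber k P = ⊤ := if_pos h
  rw [hfib]; exact Submodule.mem_top

theorem fiber_eq_zero {k : Type} [Field k] {P : Prop} (h : ¬P) (v : fiber k P) :
    (v : k) = 0 := by
  have hfib : fiber k P = ⊥ := if_neg h
  obtain ⟨w, hw⟩ := v
  have hb : w ∈ (⊥ : Submodule k k) := hfib ▸ hw
  exact (Submodule.mem_bot k).1 hb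

theorem coe_fiberMap {k : Type} [Field k] {P Q : Prop} (v : fiber k P) :
    ((fiberMap k P Q v : fiber k Q) : k) = if Q then (v : k) else 0 := by
  unfold fiberMap
  by_cases hQ : Q
  · by_cases hP : P
    · simp [hP, hQ]
    · simp [hP, hQ, fiber_eq_zero hP v]
  · simp [hQ]

/-- The scalar by which a linear map between fibers acts. -/
def fcoef {k : Type} [Field k] {P Q : Prop} (φ : fiber k P →ₗ[k] fiber k Q) : k :=
  if h : P then (φ ⟨1, fiber_mem_of h 1⟩ : k) else 0

theorem fcoef_add {k : Type} [Field k] {P Q : Prop} (φ ψ : fiber k P →ₗ[k] fiber k Q) :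
    fcoef (φ + ψ) = fcoef φ + fcoef ψ := by
  unfold fcoef; split_ifs <;> simp

theorem fcoef_smul {k : Type} [Field k] {P Q : Prop} (c : k) (φ : fiber k P →ₗ[k] fiber k Q) :
    fcoef (c • φ) = c * fcoef φ := by
  unfold fcoef; split_ifs <;> simp

theorem fcoef_zero {k : Type} [Field k] {P Q : Prop} (φ : fiber k P →ₗ[k] fiber k Q)
    (h : ¬(P ∧ Q)) : fcoef φ = 0 := by
  unfold fcoef
  split_ifs with hP
  · exact fiber_eq_zero (fun hQ => h ⟨hP, hQ⟩) _
  · rfl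

theorem coe_apply_eq {k : Type} [Field k] {P Q : Prop} (φ : fiber k P →ₗ[k] fiber k Q)
    (v : fiber k P) : (φ v : k) = fcoef φ * v := by
  by_cases hP : P
  · have hv : v = (v : k) • (⟨1, fiber_mem_of hP 1⟩ : fiber k P) := by
      apply Subtype.ext; simp
    have h2 : φ v = (v : k) • φ ⟨1, fiber_mem_of hP 1⟩ := by
      rw [← map_smul, ← hv]
    rw [h2]
    simp [fcoef, hP, mul_comm]
  · have hv : v = 0 := Subtype.ext (fiber_eq_zero hP v)
    rw [hv]; simp

theorem fcoef_smul_fiberMap {k : Type} [Field k] {P Q : Prop} (a : k)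
    (h : ¬(P ∧ Q) → a = 0) : fcoef (a • fiberMap k P Q) = a := by
  by_cases hPQ : P ∧ Q
  · simp [fcoef, hPQ.1, coe_fiberMap, hPQ.2]
  · rw [fcoef_zero _ hPQ, h hPQ]

theorem fcoef_comm {k : Type} [Field k] {P P' R R' : Prop} (φ : fiber k P →ₗ[k] fiber k P')
    (ψ : fiber k R →ₗ[k] fiber k R') (hP : P) (hR' : R')
    (h : ∀ v, ψ (fiberMap k P R v) = fiberMap k P' R' (φ v)) : fcoef ψ = fcoef φ := by
  have h1 := congrArg Subtype.val (h ⟨1, fiber_mem_of hP 1⟩)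
  rw [coe_apply_eq, coe_fiberMap, coe_fiberMap, coe_apply_eq, if_pos hR', mul_one] at h1
  rw [← h1]
  split_ifs with hR
  · simp
  · rw [fcoef_zero ψ (fun q => hR q.1)]; simp

/-- Families of scalars describing a morphism between interval representations. -/
def Fam (k : Type) [Field k] (P P' : ℕ → Prop) (ε : ℕ → Bool) (a : ℕ → k) : Prop :=
  (∀ x, ¬(P x ∧ P' x) → a x = 0) ∧
  (∀ x, ε x = true → P x → P' (x + 1) → a (x + 1) = a x) ∧
  (∀ x, ε x = false → P (x + 1) → P' x → a (x + 1) = a x)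

/-- The scalars of a morphism. -/
def hcoef {k : Type} [Field k] {n : ℕ} {ε : ℕ → Bool} {i j i' j' : ℕ}
    (f : (intervalRep k n ε i j).Hom (intervalRep k n ε i' j')) (x : ℕ) : k :=
  fcoef (P := SuppCond n i j x) (Q := SuppCond n i' j' x) (f.app x)

theorem hcoef_fam {k : Type} [Field k] {n : ℕ} {ε : ℕ → Bool} {i j i' j' : ℕ}
    (f : (intervalRep k n ε i j).Hom (intervalRep k n ε i' j')) :
    Fam k (SuppCond n i j) (SuppCond n i' j') ε (hcoef f) := by
  have h0 : ∀ x, ¬(SuppCond n i j x ∧ SuppCond n i' j' x) → hcoef f x = 0 :=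
    fun x hx => fcoef_zero _ hx
  refine ⟨h0, ?_, ?_⟩
  · intro x hε hP hP'
    refine fcoef_comm (P := SuppCond n i j x) (P' := SuppCond n i' j' x) (f.app x)
      (f.app (x + 1)) hP hP' (fun v => ?_)
    have h := f.comm_fwd x v
    have e1 : (intervalRep k n ε i j).fwd x = fiberMap k _ _ := if_pos hε
    have e2 : (intervalRep k n ε i' j').fwd x = fiberMap k _ _ := if_pos hε
    rw [e1, e2] at h
    exact h
  · intro x hε hP hP'
    have hε' : ¬ ε x = true := by simp [hε]
    refine (fcoef_comm (P := SuppCond n i j (x + 1)) (P' := SuppCond n i' j' (x + 1))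
      (f.app (x + 1)) (f.app x) hP hP' (fun v => ?_)).symm
    have h := f.comm_bwd x v
    have e1 : (intervalRep k n ε i j).bwd x = fiberMap k _ _ := if_neg hε'
    have e2 : (intervalRep k n ε i' j').bwd x = fiberMap k _ _ := if_neg hε'
    rw [e1, e2] at h
    exact h

/-- The morphism with given scalars. -/
def homOf {k : Type} [Field k] {n : ℕ} {ε : ℕ → Bool} {i j i' j' : ℕ} (a : ℕ → k)
    (ha : Fam k (SuppCond n i j) (SuppCond n i' j') ε a) :
    (intervalRep k n ε i j).Hom (intervalRep k n ε i' j') where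
  app x := a x • fiberMap k (SuppCond n i j x) (SuppCond n i' j' x)
  comm_fwd x v := by
    change fiber k (SuppCond n i j x) at v
    change (a (x + 1) • fiberMap k (SuppCond n i j (x + 1)) (SuppCond n i' j' (x + 1)))
      ((if ε x = true then fiberMap k (SuppCond n i j x) (SuppCond n i j (x + 1)) else 0) v) =
      (if ε x = true then fiberMap k (SuppCond n i' j' x) (SuppCond n i' j' (x + 1)) else 0)
      ((a x • fiberMap k (SuppCond n i j x) (SuppCond n i' j' x)) v)
    apply Subtype.ext
    by_cases hε : ε x = true
    · have h0 := ha.1 x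
      have h1 := ha.1 (x + 1)
      have h2 := ha.2.1 x hε
      have h3 := fun h => fiber_eq_zero (P := SuppCond n i j x) h v
      simp only [hε, if_true, LinearMap.smul_apply, Submodule.coe_smul, coe_fiberMap, smul_eq_mul]
      generalize (v : k) = w at *
      clear v
      by_cases p1 : SuppCond n i j x
      · by_cases p2 : SuppCond n i j (x + 1) <;> by_cases p3 : SuppCond n i' j' x <;>
          by_cases p4 : SuppCond n i' j' (x + 1) <;> simp_all
      · simp [h3 p1]
    · simp [hε]
  comm_bwd x v := by
    change fiber k (SuppCond n i j (x + 1)) at v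
    change (a x • fiberMap k (SuppCond n i j x) (SuppCond n i' j' x))
      ((if ε x = true then 0 else fiberMap k (SuppCond n i j (x + 1)) (SuppCond n i j x)) v) =
      (if ε x = true then 0 else fiberMap k (SuppCond n i' j' (x + 1)) (SuppCond n i' j' x))
      ((a (x + 1) • fiberMap k (SuppCond n i j (x + 1)) (SuppCond n i' j' (x + 1))) v)
    apply Subtype.ext
    by_cases hε : ε x = true
    · simp [hε]
    · have h0 := ha.1 x
      have h1 := ha.1 (x + 1)
      have h2 := ha.2.2 x (by simpa using hε)
      have h3 := fun h => fiber_eq_zero (P := SuppCond n i j (x + 1)) h v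
      simp only [hε, Bool.false_eq_true, if_false, LinearMap.smul_apply, Submodule.coe_smul,
        coe_fiberMap, smul_eq_mul]
      generalize (v : k) = w at *
      clear v
      by_cases p1 : SuppCond n i j (x + 1)
      · by_cases p2 : SuppCond n i j x <;> by_cases p3 : SuppCond n i' j' (x + 1) <;>
          by_cases p4 : SuppCond n i' j' x <;> simp_all
      · simp [h3 p1]

theorem hcoef_homOf {k : Type} [Field k] {n : ℕ} {ε : ℕ → Bool} {i j i' j' : ℕ} (a : ℕ → k)
    (ha : Fam k (SuppCond n i j) (SuppCond n i' j') ε a) : hcoef (homOf a ha) = a := by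
  funext x
  exact fcoef_smul_fiberMap (a x) (ha.1 x)

theorem hcoef_injective {k : Type} [Field k] {n : ℕ} {ε : ℕ → Bool} {i j i' j' : ℕ}
    {f g : (intervalRep k n ε i j).Hom (intervalRep k n ε i' j')} (h : hcoef f = hcoef g) :
    f = g := by
  apply ARep.Hom.ext
  funext x
  apply LinearMap.ext
  intro v
  apply Subtype.ext
  have e1 := coe_apply_eq (P := SuppCond n i j x) (Q := SuppCond n i' j' x) (f.app x) v
  have e2 := coe_apply_eq (P := SuppCond n i j x) (Q := SuppCond n i' j' x) (g.app x) v
  refine e1.trans (Eq.trans ?_ e2.symm)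
  exact congrArg (· * _) (congrFun h x)

theorem hcoef_add {k : Type} [Field k] {n : ℕ} {ε : ℕ → Bool} {i j i' j' : ℕ}
    (f g : (intervalRep k n ε i j).Hom (intervalRep k n ε i' j')) (x : ℕ) :
    hcoef (f.add g) x = hcoef f x + hcoef g x := fcoef_add _ _

theorem hcoef_smul {k : Type} [Field k] {n : ℕ} {ε : ℕ → Bool} {i j i' j' : ℕ} (c : k)
    (f : (intervalRep k n ε i j).Hom (intervalRep k n ε i' j')) (x : ℕ) :
    hcoef (ARep.Hom.smul c f) x = c * hcoef f x := fcoef_smul _ _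

/-- Extension of a family of scalars from `Q` to the subdivided quiver. -/
def up {k : Type} [Field k] (P P' : ℕ → Prop) (a : ℕ → k) (y : ℕ) : k :=
  if y % 2 = 1 then a ((y + 1) / 2)
  else if P (y / 2) ∧ P (y / 2 + 1) ∧ P' (y / 2) ∧ P' (y / 2 + 1) then a (y / 2) else 0

theorem up_odd {k : Type} [Field k] (P P' : ℕ → Prop) (a : ℕ → k) (x : ℕ) :
    up P P' a (2 * x + 1) = a (x + 1) := by
  unfold up
  rw [if_pos (by omega), show (2 * x + 1 + 1) / 2 = x + 1 by omega]

theorem up_even {k : Type} [Field k] (P P' : ℕ → Prop) (a : ℕ → k) (x : ℕ) :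
    up P P' a (2 * x) = if P x ∧ P (x + 1) ∧ P' x ∧ P' (x + 1) then a x else 0 := by
  unfold up
  rw [if_neg (by omega), show (2 * x) / 2 = x by omega]

theorem barε_odd (ε : ℕ → Bool) (x : ℕ) : barε ε (2 * x + 1) = ε (x + 1) := by
  unfold barε; congr 1; omega

theorem barε_even (ε : ℕ → Bool) (x : ℕ) : barε ε (2 * x) = ε x := by
  unfold barε; congr 1; omega

theorem supp_odd {n i j : ℕ} (h1 : 1 ≤ i) (h2 : i ≤ j) (x : ℕ) :
    SuppCond (2 * n + 1) (2 * i - 1) (2 * j - 1) (2 * x + 1) ↔ SuppCond n i j (x + 1) := by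
  unfold SuppCond; omega

theorem supp_even {n i j : ℕ} (h1 : 1 ≤ i) (h2 : i ≤ j) (x : ℕ) :
    SuppCond (2 * n + 1) (2 * i - 1) (2 * j - 1) (2 * x) ↔
      SuppCond n i j x ∧ SuppCond n i j (x + 1) := by
  unfold SuppCond; omega

theorem supp_zero {n i j : ℕ} : ¬ SuppCond n i j 0 := by
  unfold SuppCond; omega

section transfer

variable {k : Type} [Field k] {ε : ℕ → Bool} {P P' R R' : ℕ → Prop}

theorem up_fam (z' : ¬ P' 0) (z : ¬ P 0)
    (ho : ∀ x, R (2 * x + 1) ↔ P (x + 1)) (he : ∀ x, R (2 * x) ↔ P x ∧ P (x + 1))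
    (ho' : ∀ x, R' (2 * x + 1) ↔ P' (x + 1)) (he' : ∀ x, R' (2 * x) ↔ P' x ∧ P' (x + 1))
    {a : ℕ → k} (ha : Fam k P P' ε a) : Fam k R R' (barε ε) (up P P' a) := by
  obtain ⟨a0, a1, a2⟩ := ha
  refine ⟨?_, ?_, ?_⟩
  · intro y
    obtain ⟨x, rfl | rfl⟩ := Nat.even_or_odd' y
    · rw [up_even, he, he']; grind
    · rw [up_odd, ho, ho']; grind
  · intro y
    obtain ⟨x, rfl | rfl⟩ := Nat.even_or_odd' y
    · rw [up_even, up_odd, he, ho', barε_even]; grind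
    · rw [show 2 * x + 1 + 1 = 2 * (x + 1) by ring, up_even, up_odd, ho, he', barε_odd]; grind
  · intro y
    obtain ⟨x, rfl | rfl⟩ := Nat.even_or_odd' y
    · rw [up_even, up_odd, ho, he', barε_even]; grind
    · rw [show 2 * x + 1 + 1 = 2 * (x + 1) by ring, up_even, up_odd, he, ho', barε_odd]; grind

theorem down_fam (z' : ¬ P' 0) (z : ¬ P 0)
    (ho : ∀ x, R (2 * x + 1) ↔ P (x + 1)) (he : ∀ x, R (2 * x) ↔ P x ∧ P (x + 1))
    (ho' : ∀ x, R' (2 * x + 1) ↔ P' (x + 1)) (he' : ∀ x, R' (2 * x) ↔ P' x ∧ P' (x + 1))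
    {b : ℕ → k} (hb : Fam k R R' (barε ε) b) : Fam k P P' ε (fun x => b (2 * x - 1)) := by
  obtain ⟨b0, b1, b2⟩ := hb
  have e0 := fun x => b0 (2 * x)
  have o0 := fun x => b0 (2 * x + 1)
  have e1 := fun x => b1 (2 * x)
  have o1 := fun x => b1 (2 * x + 1)
  have e2 := fun x => b2 (2 * x)
  have o2 := fun x => b2 (2 * x + 1)
  simp only [show ∀ x, 2 * x + 1 + 1 = 2 * (x + 1) from fun x => by ring, he, he', ho, ho',
    barε_even, barε_odd] at e0 o0 e1 o1 e2 o2
  have hz : b 0 = 0 := by have := e0 0; simp_all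
  refine ⟨?_, ?_, ?_⟩
  · rintro (_ | x) hx
    · exact hz
    · exact o0 x hx
  · rintro (_ | x) hε hP hP'
    · exact absurd hP z
    · have := e0 (x + 1); have := o0 x; have := o0 (x + 1)
      have := o1 x; have := e1 (x + 1)
      change b (2 * (x + 1) + 1) = b (2 * x + 1)
      grind
  · rintro (_ | x) hε hP hP'
    · exact absurd hP' z'
    · have := e0 (x + 1); have := o0 x; have := o0 (x + 1)
      have := o2 x; have := e2 (x + 1)
      change b (2 * (x + 1) + 1) = b (2 * x + 1)
      grind

theorem down_up (z' : ¬ P' 0) {a : ℕ → k} (ha : Fam k P P' ε a) :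
    (fun x => up P P' a (2 * x - 1)) = a := by
  funext x
  rcases x with _ | x
  · have h := ha.1 0 (fun h => z' h.2)
    change up P P' a (2 * 0) = a 0
    rw [up_even, h]; simp
  · exact up_odd P P' a x

theorem up_down (z' : ¬ P' 0) (z : ¬ P 0)
    (ho : ∀ x, R (2 * x + 1) ↔ P (x + 1)) (he : ∀ x, R (2 * x) ↔ P x ∧ P (x + 1))
    (ho' : ∀ x, R' (2 * x + 1) ↔ P' (x + 1)) (he' : ∀ x, R' (2 * x) ↔ P' x ∧ P' (x + 1))
    {b : ℕ → k} (hb : Fam k R R' (barε ε) b) : up P P' (fun x => b (2 * x - 1)) = b := by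
  obtain ⟨b0, b1, b2⟩ := hb
  funext y
  obtain ⟨x, rfl | rfl⟩ := Nat.even_or_odd' y
  · rw [up_even]
    have e0 := b0 (2 * x)
    rw [he, he'] at e0
    rcases x with _ | x
    · have := e0 (by tauto)
      simp_all
    · have o1 := b1 (2 * x + 1)
      have o2 := b2 (2 * x + 1)
      simp only [show ∀ x, 2 * x + 1 + 1 = 2 * (x + 1) from fun x => by ring, he, he', ho, ho',
        barε_odd] at o1 o2
      change (if _ then b (2 * x + 1) else 0) = b (2 * (x + 1))
      cases hε : ε (x + 1) <;> grind
  · rw [up_odd]; rfl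

end transfer

/-- `dim_k Hom_{rep Q}(M(i,j), M(i′,j′)) =
dim_k Hom_{rep Q̄}(M̄(i,j), M̄(i′,j′))`, expressed by the existence of a `k`-linear
bijection between the two `Hom` spaces. -/
theorem stmt_19 (k : Type) [Field k] (n : ℕ) (ε : ℕ → Bool) (i j i' j' : ℕ)
    (h1 : 1 ≤ i) (h2 : i ≤ j) (h3 : j ≤ n + 2)
    (h4 : 1 ≤ i') (h5 : i' ≤ j') (h6 : j' ≤ n + 2) :
    ∃ e : ((intervalRep k n ε i j).Hom (intervalRep k n ε i' j')) ≃
          ((intervalRep k (2 * n + 1) (barε ε) (2 * i - 1) (2 * j - 1)).Hom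
            (intervalRep k (2 * n + 1) (barε ε) (2 * i' - 1) (2 * j' - 1))),
      (∀ f g, e (f.add g) = (e f).add (e g)) ∧
      (∀ (c : k) f, e (ARep.Hom.smul c f) = ARep.Hom.smul c (e f)) := by
  have ho := supp_odd (n := n) h1 h2
  have he := supp_even (n := n) h1 h2
  have ho' := supp_odd (n := n) h4 h5
  have he' := supp_even (n := n) h4 h5
  have z : ¬ SuppCond n i j 0 := supp_zero
  have z' : ¬ SuppCond n i' j' 0 := supp_zero
  refine ⟨{ toFun := fun f => homOf _ (up_fam z' z ho he ho' he' (hcoef_fam f))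
            invFun := fun g => homOf _ (down_fam z' z ho he ho' he' (hcoef_fam g))
            left_inv := ?_
            right_inv := ?_ }, ?_, ?_⟩
  · intro f
    apply hcoef_injective
    simp only [hcoef_homOf]
    exact down_up z' (hcoef_fam f)
  · intro g
    apply hcoef_injective
    simp only [hcoef_homOf]
    exact up_down z' z ho he ho' he' (hcoef_fam g)
  · intro f g
    apply hcoef_injective
    funext y
    rw [hcoef_add]
    simp only [Equiv.coe_fn_mk, hcoef_homOf, up, hcoef_add]
    split_ifs <;> simp
  · intro c f
    apply hcoef_injective
    funext y
    rw [hcoef_smul]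
    simp only [Equiv.coe_fn_mk, hcoef_homOf, up, hcoef_smul]
    split_ifs <;> simp

end CambrianA
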